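/- Let t ≥ 1 and let a_1, …, a_t be positive integers such that the numbers 2^{a_1}+1, …, 2^{a_t}+1 are pairwise coprime. Let i_1, …, i_t be integers and set x = ∑_{j=1}^t i_j/(2^{a_j}+1). If for every j the number i_j is not divisible by 2^{a_j}+1, then V(2; a_1, …, a_t; x) + V(2; a_1, …, a_t; −x) = −1. If instead 2^{a_j}+1 divides i_j for at least one j, then V(2; a_1, …, a_t; x) + V(2; a_1, …, a_t; −x) = 0. -/

import Mathlib

/-- `IsV2 V` says that `V : ℚ → ℚ` is the Kubert `V`-function in characteristic 2:
for any rational `x` (with odd denominator), any `k ≥ 1` and any integer `a` with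
`0 ≤ a < 2^k - 1` such that `x - a/(2^k - 1)` is an integer, `V x` equals the
binary digit sum of `a` divided by `k`. -/
def IsV2 (V : ℚ → ℚ) : Prop :=
  ∀ (x : ℚ) (k a : ℕ), 0 < k → a < 2 ^ k - 1 →
    (∃ z : ℤ, x - (a : ℚ) / ((2 : ℚ) ^ k - 1) = (z : ℚ)) →
    V x = ((Nat.digits 2 a).sum : ℚ) / (k : ℚ)

/-- `Vmulti V r x = V(2; r₁, …, r_t; x) = ∑_{S ⊆ {1,…,t}} (-1)^{t - |S|} V((∏_{j ∈ S} (2^{r_j}+1)) x)`. -/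
def Vmulti (V : ℚ → ℚ) {t : ℕ} (r : Fin t → ℕ) (x : ℚ) : ℚ :=
  ∑ S : Finset (Fin t), (-1 : ℚ) ^ (t - S.card) * V ((∏ j ∈ S, ((2 : ℚ) ^ (r j) + 1)) * x)

theorem aux_digits_step (n : ℕ) : (Nat.digits 2 n).sum = n % 2 + (Nat.digits 2 (n / 2)).sum := by
  rcases Nat.eq_zero_or_pos n with h | h
  · subst h; simp
  · rw [Nat.digits_def' (by norm_num) h]; simp

theorem aux_digits (k : ℕ) : ∀ b, b < 2 ^ k →
    (Nat.digits 2 b).sum + (Nat.digits 2 (2 ^ k - 1 - b)).sum = k := by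
  induction k with
  | zero => intro b hb; have : b = 0 := by simpa using hb
            subst this; simp
  | succ k ih =>
    intro b hb
    have h := ih (b / 2) (by rw [pow_succ] at hb; omega)
    rw [aux_digits_step b, aux_digits_step (2 ^ (k + 1) - 1 - b)]
    have e : (2 ^ (k + 1) - 1 - b) / 2 = 2 ^ k - 1 - b / 2 := by
      rw [pow_succ] at hb ⊢; omega
    have e2 : (2 ^ (k + 1) - 1 - b) % 2 = 1 - b % 2 := by
      rw [pow_succ] at hb ⊢; omega
    rw [e, e2]
    omega

theorem aux_N (V : ℚ → ℚ) (hV : IsV2 V) (k : ℕ) (hk : 0 < k) (hN : 1 < 2 ^ k) (z : ℤ) :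
    V ((z : ℚ) / ((2 : ℚ) ^ k - 1)) + V (-((z : ℚ) / ((2 : ℚ) ^ k - 1))) =
      if ((2 : ℤ) ^ k - 1) ∣ z then 0 else 1 := by
  have hNz : (1 : ℤ) < 2 ^ k := by exact_mod_cast hN
  have hNq : ((2 : ℚ) ^ k - 1) ≠ 0 := by
    have : (1 : ℚ) < 2 ^ k := by exact_mod_cast hN
    linarith
  have hkq : (k : ℚ) ≠ 0 := by exact_mod_cast hk.ne'
  obtain ⟨b, hb⟩ := Int.eq_ofNat_of_zero_le (Int.emod_nonneg z (b := (2 : ℤ) ^ k - 1) (by linarith))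
  have hlt := Int.emod_lt_of_pos z (b := (2 : ℤ) ^ k - 1) (by linarith)
  have hdm := Int.emod_add_mul_ediv z ((2 : ℤ) ^ k - 1)
  rw [hb] at hlt hdm
  have hbl : b < 2 ^ k - 1 := by
    have : ((b : ℤ)) + 1 < ((2 ^ k : ℕ) : ℤ) := by push_cast; linarith
    have : b + 1 < 2 ^ k := by exact_mod_cast this
    omega
  have hdq : (z : ℚ) = b + ((2 : ℚ) ^ k - 1) * ((z / ((2 : ℤ) ^ k - 1) : ℤ) : ℚ) := by
    have := congrArg (fun n : ℤ => (n : ℚ)) hdm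
    push_cast at this
    exact this.symm
  set q : ℤ := z / ((2 : ℤ) ^ k - 1) with hq
  have h1 := hV ((z : ℚ) / ((2 : ℚ) ^ k - 1)) k b hk hbl ⟨q, by
    rw [hdq]; field_simp; ring⟩
  rw [h1]
  split_ifs with hd
  · have hb0 : b = 0 := by
      have := Int.emod_eq_zero_of_dvd hd
      rw [hb] at this
      exact_mod_cast this
    subst hb0
    have h2 := hV (-((z : ℚ) / ((2 : ℚ) ^ k - 1))) k 0 hk hbl ⟨-q, by
      rw [hdq]; push_cast; field_simp; ring⟩
    rw [h2]; simp
  · have hb0 : b ≠ 0 := by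
      rintro rfl
      exact hd (Int.dvd_of_emod_eq_zero (by rw [hb]; rfl))
    have h2 := hV (-((z : ℚ) / ((2 : ℚ) ^ k - 1))) k (2 ^ k - 1 - b) hk (by omega) ⟨-q - 1, by
      rw [Nat.cast_sub hbl.le, Nat.cast_sub hN.le, hdq]; push_cast; field_simp; ring⟩
    rw [h2, ← add_div, div_eq_one_iff_eq hkq]
    exact_mod_cast aux_digits k b (by omega)

theorem aux_M (V : ℚ → ℚ) (hV : IsV2 V) (M : ℕ) (hM : Odd M) (z : ℤ) :
    V ((z : ℚ) / (M : ℚ)) + V (-((z : ℚ) / (M : ℚ))) = if (M : ℤ) ∣ z then 0 else 1 := by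
  have hM0 : 0 < M := hM.pos
  have hk : 0 < M.totient := Nat.totient_pos.2 hM0
  have hc : Nat.Coprime 2 M := (Nat.coprime_two_left).2 hM
  have hmod := Nat.ModEq.pow_totient hc
  have hN : 1 < 2 ^ M.totient := Nat.one_lt_two_pow hk.ne'
  obtain ⟨c, hcc⟩ := (Nat.modEq_iff_dvd' hN.le).1 hmod.symm
  have hci : (2 : ℤ) ^ M.totient - 1 = M * c := by
    have := congrArg (fun n : ℕ => (n : ℤ)) hcc
    rw [Nat.cast_sub hN.le] at this
    push_cast at this; exact this
  have hcq : (2 : ℚ) ^ M.totient - 1 = M * c := by exact_mod_cast congrArg (fun n : ℤ => (n : ℚ)) hci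
  have hc0 : c ≠ 0 := by rintro rfl; omega
  have hcq0 : (c : ℚ) ≠ 0 := by exact_mod_cast hc0
  have hMq0 : (M : ℚ) ≠ 0 := by exact_mod_cast hM0.ne'
  have h := aux_N V hV M.totient hk hN (z * c)
  have e : (((z * c : ℤ)) : ℚ) / ((2 : ℚ) ^ M.totient - 1) = (z : ℚ) / M := by
    rw [hcq]; push_cast; field_simp
  rw [e, hci] at h
  rw [h]
  have : ((M : ℤ) * c ∣ z * c) ↔ (M : ℤ) ∣ z :=
    mul_dvd_mul_iff_right (by exact_mod_cast hc0)
  simp only [this]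

theorem aux_dvd {t : ℕ} (m : Fin t → ℤ) (hm : ∀ j, m j ≠ 0)
    (hcop : ∀ j k, j ≠ k → IsCoprime (m j) (m k)) (i : Fin t → ℤ) (S : Finset (Fin t)) :
    (∏ j, m j) ∣ (∏ j ∈ S, m j) * (∑ j, i j * ∏ l ∈ Finset.univ.erase j, m l) ↔
      ∀ j ∈ Sᶜ, m j ∣ i j := by
  rw [← Finset.prod_mul_prod_compl S, mul_dvd_mul_iff_left (Finset.prod_ne_zero_iff.2 fun j _ => hm j)]
  have key : ∀ j, m j ∣ (∑ j, i j * ∏ l ∈ Finset.univ.erase j, m l) ↔ m j ∣ i j := by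
    intro j
    rw [← Finset.add_sum_erase _ _ (Finset.mem_univ j), dvd_add_left]
    · constructor
      · intro h
        refine IsCoprime.dvd_of_dvd_mul_right ?_ h
        exact IsCoprime.prod_right fun l hl => hcop j l (Finset.ne_of_mem_erase hl).symm
      · intro h; exact h.mul_right _
    · refine Finset.dvd_sum fun l hl => Dvd.dvd.mul_left (Finset.dvd_prod_of_mem _ ?_) _
      simp [(Finset.ne_of_mem_erase hl).symm]
  constructor
  · intro h j hj
    exact (key j).1 ((Finset.dvd_prod_of_mem m hj).trans h)
  · intro h
    refine Finset.prod_dvd_of_coprime ?_ fun j hj => (key j).2 (h j hj)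
    intro j _ k _ hjk
    exact hcop j k hjk

theorem aux_sum (V : ℚ → ℚ) (hV : IsV2 V) (t : ℕ) (ht : 1 ≤ t)
    (a : Fin t → ℕ) (hpos : ∀ j, 0 < a j)
    (hcop : ∀ j k, j ≠ k → Nat.Coprime (2 ^ a j + 1) (2 ^ a k + 1))
    (i : Fin t → ℤ) (x : ℚ) (hxdef : x = ∑ j, (i j : ℚ) / ((2 : ℚ) ^ a j + 1)) :
    Vmulti V a x + Vmulti V a (-x) =
      - (if (Finset.univ.filter fun j => (2 ^ a j + 1 : ℤ) ∣ i j) = ∅ then 1 else 0) := by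
  set W : Finset (Fin t) := Finset.univ.filter fun j => (2 ^ a j + 1 : ℤ) ∣ i j with hW
  have hterm : ∀ S : Finset (Fin t),
      V ((∏ j ∈ S, ((2 : ℚ) ^ (a j) + 1)) * x) + V ((∏ j ∈ S, ((2 : ℚ) ^ (a j) + 1)) * (-x)) =
        if Sᶜ ⊆ W then 0 else 1 := by
    intro S
    have hodd : Odd (∏ j, (2 ^ a j + 1) : ℕ) := by
      refine Finset.prod_induction _ Odd (fun _ _ => Odd.mul) odd_one fun j _ => ?_
      exact Even.add_one (Even.pow_of_ne_zero even_two (hpos j).ne')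
    have h := aux_M V hV _ hodd ((∏ j ∈ S, ((2 : ℤ) ^ a j + 1)) *
      (∑ j, i j * ∏ l ∈ Finset.univ.erase j, ((2 : ℤ) ^ a l + 1)))
    have hne : ∀ j, ((2 : ℚ) ^ a j + 1) ≠ 0 := fun j => by positivity
    have hx : x = (∑ j, (i j : ℚ) * ∏ l ∈ Finset.univ.erase j, ((2 : ℚ) ^ a l + 1)) /
        ∏ j, ((2 : ℚ) ^ a j + 1) := by
      rw [hxdef, Finset.sum_div]
      refine Finset.sum_congr rfl fun j _ => ?_
      rw [← Finset.mul_prod_erase Finset.univ _ (Finset.mem_univ j)]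
      have h0 : ∏ l ∈ Finset.univ.erase j, ((2 : ℚ) ^ a l + 1) ≠ 0 :=
        Finset.prod_ne_zero_iff.2 fun l _ => hne l
      rw [mul_div_mul_right _ _ h0]
    have hd := aux_dvd (fun j => (2 : ℤ) ^ a j + 1) (fun j => by positivity)
      (fun j k hjk => by
        have := Nat.isCoprime_iff_coprime.2 (hcop j k hjk)
        push_cast at this; exact this) i S
    have hsub : Sᶜ ⊆ W ↔ ∀ j ∈ Sᶜ, (2 : ℤ) ^ a j + 1 ∣ i j := by
      simp [hW, Finset.subset_iff]
    push_cast at h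
    simp only [hd, ← hsub] at h
    rw [mul_neg, hx, ← mul_div_assoc]
    exact h
  unfold Vmulti
  rw [← Finset.sum_add_distrib]
  simp only [← mul_add, hterm]
  have hpw : ∀ U : Finset (Fin t),
      (∑ S ∈ U.powerset, (-1 : ℚ) ^ S.card) = if U = ∅ then 1 else 0 := by
    intro U
    have := Finset.sum_powerset_neg_one_pow_card (x := U)
    exact_mod_cast congrArg (fun n : ℤ => (n : ℚ)) this
  have hall : (∑ S : Finset (Fin t), (-1 : ℚ) ^ S.card) = 0 := by
    have := hpw Finset.univ
    rw [Finset.powerset_univ, if_neg] at this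
    · exact this
    · haveI : Nonempty (Fin t) := ⟨⟨0, ht⟩⟩
      exact Finset.univ_nonempty.ne_empty
  have hre : (∑ S : Finset (Fin t), (-1 : ℚ) ^ (t - S.card) * (if Sᶜ ⊆ W then 0 else 1)) =
      ∑ S : Finset (Fin t), (-1 : ℚ) ^ S.card * (if S ⊆ W then 0 else 1) := by
    refine Fintype.sum_bijective (fun S : Finset (Fin t) => Sᶜ) compl_bijective _ _ fun S => ?_
    rw [Finset.card_compl, Fintype.card_fin]
  rw [hre, ← hpw W]
  have hsplit : ∀ S : Finset (Fin t), (-1 : ℚ) ^ S.card * (if S ⊆ W then 0 else 1) =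
      (-1 : ℚ) ^ S.card - (if S ∈ W.powerset then (-1 : ℚ) ^ S.card else 0) := by
    intro S
    simp only [Finset.mem_powerset]
    split_ifs <;> simp
  simp only [hsplit]
  rw [Finset.sum_sub_distrib, hall, Finset.sum_ite_mem, Finset.univ_inter, zero_sub]

/-- For `t ≥ 1` and positive integers `a₁, …, a_t` with `2^{a_j}+1` pairwise coprime,
setting `x = ∑_j i_j/(2^{a_j}+1)`: if no `i_j` is divisible by `2^{a_j}+1` then
`V(2; a; x) + V(2; a; -x) = -1`; if some `i_j` is divisible by `2^{a_j}+1` then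
`V(2; a; x) + V(2; a; -x) = 0`. -/
theorem stmt_8 (V : ℚ → ℚ) (hV : IsV2 V) (t : ℕ) (ht : 1 ≤ t)
    (a : Fin t → ℕ) (hpos : ∀ j, 0 < a j)
    (hcop : ∀ j k, j ≠ k → Nat.Coprime (2 ^ a j + 1) (2 ^ a k + 1))
    (i : Fin t → ℤ) (x : ℚ) (hxdef : x = ∑ j, (i j : ℚ) / ((2 : ℚ) ^ a j + 1)) :
    ((∀ j, ¬ ((2 ^ a j + 1 : ℤ) ∣ i j)) →
        Vmulti V a x + Vmulti V a (-x) = -1) ∧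
      ((∃ j, (2 ^ a j + 1 : ℤ) ∣ i j) →
        Vmulti V a x + Vmulti V a (-x) = 0) := by
  rw [aux_sum V hV t ht a hpos hcop i x hxdef]
  constructor
  · intro h
    rw [if_pos (by simpa [Finset.filter_eq_empty_iff] using h)]
  · rintro ⟨j, hj⟩
    rw [if_neg, neg_zero]
    intro h
    have : j ∈ (∅ : Finset (Fin t)) := by rw [← h]; simp [hj]
    simp at this
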